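/- Let Γ be a nicely distance-balanced graph with diameter d ≥ 3 and γ(Γ) = d+1. Let x_0, x_1, …, x_d be a shortest path in Γ between two vertices x_0 and x_d at distance d, and set D^i_j = D^i_j(x_1,x_0). Then for every i with 3 ≤ i ≤ d−1, the vertex x_i has no neighbour in D^i_{i−1} ∪ D^{i−1}_{i−1}. -/

import Mathlib

open SimpleGraph Finset

/-- `W_{u,v}`: the set of vertices strictly closer to `u` than to `v`. -/
noncomputable def ndbW {V : Type*} [Fintype V] (G : SimpleGraph V) (u v : V) : Finset V :=
  Finset.univ.filter fun x => G.dist x u < G.dist x v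

/-- `D^i_j(u,v)`: the set of vertices at distance `i` from `u` and `j` from `v`. -/
noncomputable def ndbD {V : Type*} [Fintype V] (G : SimpleGraph V) (u v : V) (i j : ℕ) : Finset V :=
  Finset.univ.filter fun x => G.dist x u = i ∧ G.dist x v = j

/-- `G` is nicely distance-balanced with constant `γ`. -/
def IsNDB {V : Type*} [Fintype V] (G : SimpleGraph V) (γ : ℕ) : Prop :=
  ∀ u v : V, G.Adj u v → (ndbW G u v).card = γ ∧ (ndbW G v u).card = γ

/-- `G` has diameter `d`. -/
def HasDiam {V : Type*} [Fintype V] (G : SimpleGraph V) (d : ℕ) : Prop :=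
  (∀ u v : V, G.dist u v ≤ d) ∧ ∃ u v : V, G.dist u v = d

/-!
Put `d = n + 1`. Every vertex on a geodesic from `x 0` to `x n` is closer to `x n` than to
`x (n + 1)`; this accounts for the `n + 1` vertices `x 0, …, x n`, so `W_{x n, x (n + 1)}`, which
has `n + 2` elements, contains only one vertex off the path. Suppose that `z` is a neighbour of
`x i` at distance `i - 1` from `x 0` and at least as far from `x 1`, and let `y` be the vertex
preceding `z` on a geodesic from `x 0` to `z`. Going from `x 0` through `y`, `z` and `x i` to `x n`
is again a geodesic, so both `y` and `z` belong to `W_{x n, x (n + 1)}`. Both are at least as far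
from `x 1` as from `x 0`, and neither is `x 0` since `3 ≤ i`; as every `x j` with `j > 0` is closer
to `x 1` than to `x 0`, neither lies on the path.
-/

section

variable {V : Type*} {G : SimpleGraph V}

/-- The set `W_{u,v}` of vertices strictly closer to `u` than to `v`, in a possibly infinite
graph. A vertex in another component than `u` and `v` is not included, as both its distances are the
junk value `0`. -/
def closerSet (G : SimpleGraph V) (u v : V) : Set V :=
  {w | G.dist w u < G.dist w v}

/-- The vertices `x 0, x 1, …, x d` form a shortest path of length `d`. The values of `x` beyond `d`
are irrelevant. -/
structure IsGeodesic (G : SimpleGraph V) (x : ℕ → V) (d : ℕ) : Prop where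
  adj : ∀ i < d, G.Adj (x i) (x (i + 1))
  dist_eq : G.dist (x 0) (x d) = d

theorem IsNDB.encard_closerSet [Fintype V] {γ : ℕ} (h : IsNDB G γ) {u v : V} (huv : G.Adj u v) :
    (closerSet G u v).encard = γ := by
  have hcoe : closerSet G u v = ndbW G u v := by simp [closerSet, ndbW]
  rw [hcoe, Set.encard_coe_eq_coe_finsetCard, (h u v huv).1]

theorem mem_closerSet_of_dist_add_dist_lt {u v v' w : V} (huw : G.Reachable u w)
    (h : G.dist u w + G.dist w v < G.dist u v') : w ∈ closerSet G v v' := by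
  have := huw.dist_triangle_left v'
  simp only [closerSet, Set.mem_ofPred_eq]
  omega

theorem dist_le_dist_add_one_of_adj {u v : V} (h : G.Adj u v) (w : V) :
    G.dist u w ≤ G.dist v w + 1 := by
  have htri := h.reachable.dist_triangle_left w
  rwa [dist_eq_one_iff_adj.mpr h, add_comm] at htri

theorem exists_adj_dist_add_one_eq {u v : V} (h : G.dist u v ≠ 0) :
    ∃ w, G.Adj u w ∧ G.dist w v + 1 = G.dist u v := by
  obtain ⟨p, hp⟩ := exists_walk_of_dist_ne_zero h
  cases p with
  | nil => exact absurd dist_self h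
  | @cons _ w _ huw q =>
    refine ⟨w, huw, le_antisymm ?_ (dist_le_dist_add_one_of_adj huw v)⟩
    calc G.dist w v + 1 ≤ q.length + 1 := by gcongr; exact dist_le q
      _ = G.dist u v := hp

namespace IsGeodesic

variable {x : ℕ → V} {d n : ℕ}

theorem exists_walk_length_eq_sub (hx : IsGeodesic G x d) {a b : ℕ} (hab : a ≤ b) (hb : b ≤ d) :
    ∃ p : G.Walk (x a) (x b), p.length = b - a := by
  induction b, hab using Nat.le_induction with
  | base => exact ⟨.nil, by simp⟩
  | succ b hab ih =>
    obtain ⟨p, hp⟩ := ih (by omega)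
    exact ⟨p.concat (hx.adj b hb), by rw [Walk.length_concat, hp, Nat.sub_add_comm hab]⟩

theorem reachable (hx : IsGeodesic G x d) {a b : ℕ} (hab : a ≤ b) (hb : b ≤ d) :
    G.Reachable (x a) (x b) :=
  (hx.exists_walk_length_eq_sub hab hb).nonempty

theorem dist_eq_sub (hx : IsGeodesic G x d) {a b : ℕ} (hab : a ≤ b) (hb : b ≤ d) :
    G.dist (x a) (x b) = b - a := by
  have dist_le_sub {a b : ℕ} (hab : a ≤ b) (hb : b ≤ d) : G.dist (x a) (x b) ≤ b - a := by
    obtain ⟨p, hp⟩ := hx.exists_walk_length_eq_sub hab hb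
    exact hp ▸ dist_le p
  have hd : d ≤ a + G.dist (x a) (x b) + (d - b) :=
    calc d = G.dist (x 0) (x d) := hx.dist_eq.symm
      _ ≤ G.dist (x 0) (x b) + G.dist (x b) (x d) :=
        (hx.reachable (Nat.zero_le _) hb).dist_triangle_left _
      _ ≤ G.dist (x 0) (x a) + G.dist (x a) (x b) + G.dist (x b) (x d) := by
        gcongr
        exact (hx.reachable hab hb).dist_triangle_right _
      _ ≤ a + G.dist (x a) (x b) + (d - b) := by
        gcongr
        · exact dist_le_sub (Nat.zero_le _) (hab.trans hb)
        · exact dist_le_sub hb le_rfl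
  have := dist_le_sub hab hb
  omega

theorem injOn (hx : IsGeodesic G x d) : Set.InjOn x (Set.Iic d) := by
  intro a ha b hb hab
  have h : G.dist (x 0) (x a) = G.dist (x 0) (x b) := by rw [hab]
  simpa only [hx.dist_eq_sub a.zero_le ha, hx.dist_eq_sub b.zero_le hb, Nat.sub_zero] using h

theorem notMem_image_of_dist_le (hx : IsGeodesic G x d) {w : V} (hw : G.dist w (x 0) ≠ 0)
    (hle : G.dist w (x 0) ≤ G.dist w (x 1)) : w ∉ x '' Set.Iic d := by
  rintro ⟨j, hj : j ≤ d, rfl⟩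
  have h0 : G.dist (x j) (x 0) = j := by
    rw [SimpleGraph.dist_comm, hx.dist_eq_sub j.zero_le hj, Nat.sub_zero]
  have h1 : G.dist (x j) (x 1) = j - 1 := by
    rw [SimpleGraph.dist_comm, hx.dist_eq_sub (by omega) hj]
  omega

theorem image_subset_closerSet (hx : IsGeodesic G x (n + 1)) :
    x '' Set.Iic n ⊆ closerSet G (x n) (x (n + 1)) := by
  rintro _ ⟨j, hj : j ≤ n, rfl⟩
  apply mem_closerSet_of_dist_add_dist_lt (hx.reachable j.zero_le (by omega))
  rw [hx.dist_eq, hx.dist_eq_sub j.zero_le (by omega), hx.dist_eq_sub hj n.le_succ]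
  omega

theorem subsingleton_closerSet_sdiff (hx : IsGeodesic G x (n + 1))
    (hW : (closerSet G (x n) (x (n + 1))).encard ≤ n + 2) :
    (closerSet G (x n) (x (n + 1)) \ x '' Set.Iic n).Subsingleton := by
  have hpath : (x '' Set.Iic n).encard = (n + 1 : ℕ) := by
    rw [(hx.injOn.mono (Set.Iic_subset_Iic.mpr n.le_succ)).encard_image, ← Finset.coe_Iic,
      Set.encard_coe_eq_coe_finsetCard, Nat.card_Iic]
  rw [← Set.encard_le_one_iff_subsingleton,
    ← ENat.add_le_add_iff_right (ENat.natCast_ne_top (n + 1)), ← hpath,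
    Set.encard_sdiff_add_encard_of_subset hx.image_subset_closerSet, hpath]
  exact hW.trans_eq (by norm_cast; omega)

theorem mem_closerSet_sdiff (hx : IsGeodesic G x (n + 1)) {w : V} (hw : G.dist w (x 0) ≠ 0)
    (hle : G.dist w (x 0) ≤ G.dist w (x 1)) (hlt : G.dist w (x 0) + G.dist w (x n) < n + 1) :
    w ∈ closerSet G (x n) (x (n + 1)) \ x '' Set.Iic n := by
  refine ⟨mem_closerSet_of_dist_add_dist_lt (Reachable.of_dist_ne_zero hw).symm ?_, fun hmem => ?_⟩
  · rwa [SimpleGraph.dist_comm, hx.dist_eq]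
  · exact hx.notMem_image_of_dist_le hw hle
      (Set.image_mono (Set.Iic_subset_Iic.mpr n.le_succ) hmem)

end IsGeodesic

theorem stmt_2_general {x : ℕ → V} {n : ℕ} (hx : IsGeodesic G x (n + 1))
    (hW : (closerSet G (x n) (x (n + 1))).encard ≤ n + 2) {i : ℕ} (hi : 3 ≤ i) (hin : i ≤ n)
    {z : V} (hz : G.Adj (x i) z) (hz0 : G.dist z (x 0) + 1 = i) :
    G.dist z (x 1) < G.dist z (x 0) := by
  by_contra! hz1
  have hz_ne : G.dist z (x 0) ≠ 0 := by omega
  obtain ⟨y, hzy, hy0⟩ := exists_adj_dist_add_one_eq hz_ne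
  have hy1 : G.dist z (x 1) ≤ G.dist y (x 1) + 1 := dist_le_dist_add_one_of_adj hzy _
  have hzn : G.dist z (x n) ≤ n - i + 1 :=
    hx.dist_eq_sub hin n.le_succ ▸ dist_le_dist_add_one_of_adj hz.symm _
  have hyn : G.dist y (x n) ≤ G.dist z (x n) + 1 := dist_le_dist_add_one_of_adj hzy.symm _
  have hz_mem := hx.mem_closerSet_sdiff hz_ne hz1 (by omega)
  have hy_mem := hx.mem_closerSet_sdiff (w := y) (by omega) (by omega) (by omega)
  exact hzy.ne (hx.subsingleton_closerSet_sdiff hW hz_mem hy_mem)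

end

/-- Let `Γ` be NDB with diameter `d ≥ 3` and `γ = d + 1`, and let
`x 0, x 1, …, x d` be a shortest path between vertices at distance `d`. Then for
`3 ≤ i ≤ d - 1`, the vertex `x i` has no neighbour in
`D^i_{i-1}(x 1, x 0) ∪ D^{i-1}_{i-1}(x 1, x 0)`. -/
theorem stmt_2 {V : Type*} [Fintype V] [DecidableEq V] (G : SimpleGraph V)
    (hconn : G.Connected) (d : ℕ) (hd : 3 ≤ d) (hdiam : HasDiam G d)
    (hndb : IsNDB G (d + 1)) (x : ℕ → V)
    (hadj : ∀ i < d, G.Adj (x i) (x (i + 1)))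
    (hgeo : G.dist (x 0) (x d) = d) :
    ∀ i : ℕ, 3 ≤ i → i ≤ d - 1 → ∀ z : V, G.Adj (x i) z →
      z ∉ ndbD G (x 1) (x 0) i (i - 1) ∪ ndbD G (x 1) (x 0) (i - 1) (i - 1) := by
  intro i hi hid z hz hmem
  obtain ⟨n, rfl⟩ : ∃ n, d = n + 1 := ⟨d - 1, by omega⟩
  have hW := (hndb.encard_closerSet (hadj n n.lt_succ_self)).le
  have hlt := stmt_2_general ⟨hadj, hgeo⟩ hW hi hid hz
  simp only [ndbD, mem_union, mem_filter, mem_univ, true_and] at hmem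
  omega
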